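/- Suppose each c_j is strictly increasing on T_j (regularity), and let (p*, x*) be the optimal mechanism: p* : T → ℝ^m is a measurable allocation such that at every t ∈ T, if max_i W_i(t) > 0 then p*_k(t) = 1 for some maximizer k of i ↦ W_i(t) and p*_i(t) = 0 for i ≠ k, while otherwise p*(t) = 0; and x*_j(t) = θ t_j ∑_{i∈S_j} p*_i(t) − θ ∫_{a_j}^{t_j} ∑_{i∈S_j} p*_i(τ, t_{−j}) dτ. Then (p*, x*) satisfies FF, IC and IR, and for every mechanism (p, x) with p, x measurable, each x_j integrable, and satisfying FF, IC and IR, one has ER(p, x) ≤ ER(p*, x*). (Theorem 1: revenue optimality of the proposed auction.) -/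

import Mathlib

open MeasureTheory Finset

noncomputable section Caching

/-- The joint type space T = ∏_j [a_j, ā_j]. -/
def Tspace {n : ℕ} (a abar : Fin n → ℝ) : Set (Fin n → ℝ) :=
  Set.univ.pi fun j => Set.Icc (a j) (abar j)

/-- The joint density f(t) = ∏_j f_j(t_j). -/
def jointDens {n : ℕ} (f : Fin n → ℝ → ℝ) (t : Fin n → ℝ) : ℝ :=
  ∏ j, f j (t j)

/-- Interim allocation p̃_j(τ) = ∫_{T_{−j}} (∑_{i∈S_j} p_i(τ, t_{−j})) f_{−j}(t_{−j}) dt_{−j},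
written as an integral over the whole type space against the joint density
(the coordinate j integrates out since f_j is a probability density). -/
def interimAlloc {n m : ℕ} (a abar : Fin n → ℝ) (f : Fin n → ℝ → ℝ)
    (S : Fin n → Finset (Fin m)) (p : (Fin n → ℝ) → Fin m → ℝ)
    (j : Fin n) (τ : ℝ) : ℝ :=
  ∫ t in Tspace a abar, (∑ i ∈ S j, p (Function.update t j τ) i) * jointDens f t

/-- Interim payment x̃_j(τ) = ∫_{T_{−j}} x_j(τ, t_{−j}) f_{−j}(t_{−j}) dt_{−j}. -/
def interimPay {n : ℕ} (a abar : Fin n → ℝ) (f : Fin n → ℝ → ℝ)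
    (x : (Fin n → ℝ) → Fin n → ℝ) (j : Fin n) (τ : ℝ) : ℝ :=
  ∫ t in Tspace a abar, x (Function.update t j τ) j * jointDens f t

/-- Truthful interim utility ṽ_j(t) = θ t p̃_j(t) − x̃_j(t). -/
def vtld {n m : ℕ} (θ : ℝ) (a abar : Fin n → ℝ) (f : Fin n → ℝ → ℝ)
    (S : Fin n → Finset (Fin m)) (p : (Fin n → ℝ) → Fin m → ℝ)
    (x : (Fin n → ℝ) → Fin n → ℝ) (j : Fin n) (t : ℝ) : ℝ :=
  θ * t * interimAlloc a abar f S p j t - interimPay a abar f x j t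

/-- The virtual valuation c_j(t) = t − (1 − F_j(t))/f_j(t). -/
def virtVal {n : ℕ} (a : Fin n → ℝ) (f : Fin n → ℝ → ℝ) (j : Fin n) (t : ℝ) : ℝ :=
  t - (1 - ∫ τ in (a j)..t, f j τ) / f j t

/-- The virtual welfare of content i at type profile t:
W_i(t) = ∑_{s ∈ Ω_i} (θ c_s(t_s) − h(θ)) − r_i, where Ω_i = {j : i ∈ S_j}. -/
def virtWelfare {n m : ℕ} (θ hval : ℝ) (r : Fin m → ℝ)
    (S : Fin n → Finset (Fin m)) (c : Fin n → ℝ → ℝ)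
    (i : Fin m) (t : Fin n → ℝ) : ℝ :=
  (∑ s ∈ Finset.univ.filter fun j => i ∈ S j, (θ * c s (t s) - hval)) - r i

/-- The payment rule x*_j(t) = θ t_j ∑_{i∈S_j} p_i(t)
− θ ∫_{a_j}^{t_j} ∑_{i∈S_j} p_i(τ, t_{−j}) dτ. -/
def xstar {n m : ℕ} (θ : ℝ) (a : Fin n → ℝ) (S : Fin n → Finset (Fin m))
    (p : (Fin n → ℝ) → Fin m → ℝ) (t : Fin n → ℝ) (j : Fin n) : ℝ :=
  θ * t j * (∑ i ∈ S j, p t i)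
    - θ * ∫ τ in (a j)..(t j), ∑ i ∈ S j, p (Function.update t j τ) i

/-- Expected revenue
ER(p, x) = ∫_T [ ∑_j x_j(t) − ∑_i p_i(t) r_i − ∑_i p_i(t) |Ω_i| h(θ) ] f(t) dt. -/
def expRev {n m : ℕ} (hval : ℝ) (r : Fin m → ℝ) (a abar : Fin n → ℝ)
    (f : Fin n → ℝ → ℝ) (S : Fin n → Finset (Fin m))
    (p : (Fin n → ℝ) → Fin m → ℝ) (x : (Fin n → ℝ) → Fin n → ℝ) : ℝ :=
  ∫ t in Tspace a abar,
    (∑ j, x t j - ∑ i, p t i * r i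
      - ∑ i, p t i * ((Finset.univ.filter fun j => i ∈ S j).card : ℝ) * hval)
      * jointDens f t

/-- Incentive compatibility of a mechanism (p, x). -/
def IC {n m : ℕ} (θ : ℝ) (a abar : Fin n → ℝ) (f : Fin n → ℝ → ℝ)
    (S : Fin n → Finset (Fin m)) (p : (Fin n → ℝ) → Fin m → ℝ)
    (x : (Fin n → ℝ) → Fin n → ℝ) : Prop :=
  ∀ j, ∀ τ ∈ Set.Icc (a j) (abar j), ∀ t ∈ Set.Icc (a j) (abar j),
    θ * t * interimAlloc a abar f S p j τ - interimPay a abar f x j τ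
      ≤ vtld θ a abar f S p x j t

/-- Individual rationality of a mechanism (p, x). -/
def IR {n m : ℕ} (θ : ℝ) (a abar : Fin n → ℝ) (f : Fin n → ℝ → ℝ)
    (S : Fin n → Finset (Fin m)) (p : (Fin n → ℝ) → Fin m → ℝ)
    (x : (Fin n → ℝ) → Fin n → ℝ) : Prop :=
  ∀ j, ∀ t ∈ Set.Icc (a j) (abar j), 0 ≤ vtld θ a abar f S p x j t

/-- marginal law of user j -/
def nuj {n : ℕ} (a abar : Fin n → ℝ) (f : Fin n → ℝ → ℝ) (j : Fin n) : Measure ℝ :=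
  (volume.restrict (Set.Icc (a j) (abar j))).withDensity fun t => ENNReal.ofReal (f j t)

lemma f_integrable {n : ℕ} {a abar : Fin n → ℝ} {f : Fin n → ℝ → ℝ}
    (hfprob : ∀ j, ∫ t in Set.Icc (a j) (abar j), f j t = 1) (j : Fin n) :
    IntegrableOn (f j) (Set.Icc (a j) (abar j)) := by
  by_contra h
  have := integral_undef h
  rw [hfprob j] at this
  exact one_ne_zero this

lemma nuj_apply {n : ℕ} {a abar : Fin n → ℝ} {f : Fin n → ℝ → ℝ}
    (hfpos : ∀ j, ∀ t ∈ Set.Icc (a j) (abar j), 0 < f j t)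
    (hfprob : ∀ j, ∫ t in Set.Icc (a j) (abar j), f j t = 1) (j : Fin n)
    {s : Set ℝ} (hs : MeasurableSet s) :
    nuj a abar f j s
      = ENNReal.ofReal (∫ t, f j t ∂((volume.restrict (Set.Icc (a j) (abar j))).restrict s)) := by
  rw [nuj, withDensity_apply _ hs, ofReal_integral_eq_lintegral_ofReal]
  · exact Integrable.restrict (f_integrable hfprob j)
  · refine ae_restrict_of_ae ?_
    filter_upwards [ae_restrict_mem measurableSet_Icc] with t ht using (hfpos j t ht).le

lemma nuj_prob {n : ℕ} {a abar : Fin n → ℝ} {f : Fin n → ℝ → ℝ}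
    (hfpos : ∀ j, ∀ t ∈ Set.Icc (a j) (abar j), 0 < f j t)
    (hfprob : ∀ j, ∫ t in Set.Icc (a j) (abar j), f j t = 1) (j : Fin n) :
    IsProbabilityMeasure (nuj a abar f j) := by
  constructor
  rw [nuj_apply hfpos hfprob j MeasurableSet.univ, Measure.restrict_univ, hfprob j]
  simp

lemma jd_meas {n : ℕ} {f : Fin n → ℝ → ℝ} (hfmeas : ∀ j, Measurable (f j)) :
    Measurable (jointDens f) := by
  unfold jointDens
  exact Finset.measurable_fun_prod _ fun j _ => (hfmeas j).comp (measurable_pi_apply j)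

lemma Tspace_meas {n : ℕ} (a abar : Fin n → ℝ) : MeasurableSet (Tspace a abar) :=
  MeasurableSet.univ_pi fun _ => measurableSet_Icc

lemma jd_nonneg {n : ℕ} {a abar : Fin n → ℝ} {f : Fin n → ℝ → ℝ}
    (hfpos : ∀ j, ∀ t ∈ Set.Icc (a j) (abar j), 0 < f j t) :
    ∀ t ∈ Tspace a abar, 0 ≤ jointDens f t := fun _ ht =>
  Finset.prod_nonneg fun j _ => (hfpos j _ (ht j (Set.mem_univ j))).le

lemma pi_nuj {n : ℕ} {a abar : Fin n → ℝ} {f : Fin n → ℝ → ℝ}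
    (hfpos : ∀ j, ∀ t ∈ Set.Icc (a j) (abar j), 0 < f j t)
    (hfprob : ∀ j, ∫ t in Set.Icc (a j) (abar j), f j t = 1) :
    Measure.pi (nuj a abar f)
      = (volume.restrict (Tspace a abar)).withDensity
          fun t => ENNReal.ofReal (jointDens f t) := by
  have := nuj_prob hfpos hfprob
  have hvol : volume.restrict (Tspace a abar)
      = Measure.pi fun j => volume.restrict (Set.Icc (a j) (abar j)) := by
    rw [Tspace, volume_pi, Measure.restrict_pi_pi]
  refine Measure.pi_eq fun s hs => ?_
  have hint : Integrable (jointDens f) (volume.restrict (Tspace a abar)) := by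
    rw [hvol]
    exact Integrable.fintype_prod fun j => f_integrable hfprob j
  rw [withDensity_apply _ (MeasurableSet.univ_pi hs), ← ofReal_integral_eq_lintegral_ofReal]
  · rw [hvol, Measure.restrict_pi_pi]
    unfold jointDens
    rw [integral_fintype_prod_eq_prod, ENNReal.ofReal_prod_of_nonneg]
    · exact Finset.prod_congr rfl fun j _ => (nuj_apply hfpos hfprob j (hs j)).symm
    · intro j _
      refine integral_nonneg_of_ae (ae_restrict_of_ae ?_)
      filter_upwards [ae_restrict_mem measurableSet_Icc] with t ht using (hfpos j t ht).le
  · exact hint.restrict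
  · refine ae_restrict_of_ae ?_
    filter_upwards [ae_restrict_mem (Tspace_meas a abar)] with t ht using jd_nonneg hfpos t ht

lemma integral_conv {n : ℕ} {a abar : Fin n → ℝ} {f : Fin n → ℝ → ℝ}
    (hfmeas : ∀ j, Measurable (f j))
    (hfpos : ∀ j, ∀ t ∈ Set.Icc (a j) (abar j), 0 < f j t)
    (hfprob : ∀ j, ∫ t in Set.Icc (a j) (abar j), f j t = 1) (G : (Fin n → ℝ) → ℝ) :
    ∫ t in Tspace a abar, G t * jointDens f t = ∫ t, G t ∂(Measure.pi (nuj a abar f)) := by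
  rw [pi_nuj hfpos hfprob, integral_withDensity_eq_integral_toReal_smul
    (jd_meas hfmeas).ennreal_ofReal (by simp)]
  refine setIntegral_congr_fun (Tspace_meas a abar) fun t ht => ?_
  simp only [smul_eq_mul]
  rw [ENNReal.toReal_ofReal (jd_nonneg hfpos t ht), mul_comm]

lemma integrable_conv {n : ℕ} {a abar : Fin n → ℝ} {f : Fin n → ℝ → ℝ}
    (hfmeas : ∀ j, Measurable (f j))
    (hfpos : ∀ j, ∀ t ∈ Set.Icc (a j) (abar j), 0 < f j t)
    (hfprob : ∀ j, ∫ t in Set.Icc (a j) (abar j), f j t = 1) (G : (Fin n → ℝ) → ℝ) :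
    IntegrableOn (fun t => G t * jointDens f t) (Tspace a abar)
      ↔ Integrable G (Measure.pi (nuj a abar f)) := by
  rw [pi_nuj hfpos hfprob, integrable_withDensity_iff_integrable_smul'
    (jd_meas hfmeas).ennreal_ofReal (by simp)]
  refine integrableOn_congr_fun (fun t ht => ?_) (Tspace_meas a abar)
  simp only [smul_eq_mul]
  rw [ENNReal.toReal_ofReal (jd_nonneg hfpos t ht), mul_comm]

lemma ae_mem_T {n : ℕ} {a abar : Fin n → ℝ} {f : Fin n → ℝ → ℝ}
    (hfpos : ∀ j, ∀ t ∈ Set.Icc (a j) (abar j), 0 < f j t)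
    (hfprob : ∀ j, ∫ t in Set.Icc (a j) (abar j), f j t = 1) :
    ∀ᵐ t ∂(Measure.pi (nuj a abar f)), t ∈ Tspace a abar := by
  rw [pi_nuj hfpos hfprob]
  exact (withDensity_absolutelyContinuous _ _).ae_le (ae_restrict_mem (Tspace_meas a abar))

lemma nuj_ac {n : ℕ} (a abar : Fin n → ℝ) (f : Fin n → ℝ → ℝ) (j : Fin n) :
    nuj a abar f j ≪ volume.restrict (Set.Icc (a j) (abar j)) :=
  withDensity_absolutelyContinuous _ _

lemma ae_mem_Icc {n : ℕ} (a abar : Fin n → ℝ) (f : Fin n → ℝ → ℝ) (j : Fin n) :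
    ∀ᵐ t ∂(nuj a abar f j), t ∈ Set.Icc (a j) (abar j) :=
  (nuj_ac a abar f j).ae_le (ae_restrict_mem measurableSet_Icc)

lemma integral_nuj {n : ℕ} {a abar : Fin n → ℝ} {f : Fin n → ℝ → ℝ}
    (hfmeas : ∀ j, Measurable (f j))
    (hfpos : ∀ j, ∀ t ∈ Set.Icc (a j) (abar j), 0 < f j t) (j : Fin n) (G : ℝ → ℝ) :
    ∫ t, G t ∂(nuj a abar f j) = ∫ t in Set.Icc (a j) (abar j), G t * f j t := by
  rw [nuj, integral_withDensity_eq_integral_toReal_smul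
    (hfmeas j).ennreal_ofReal (by simp)]
  refine setIntegral_congr_fun measurableSet_Icc fun t ht => ?_
  simp only [smul_eq_mul]
  rw [ENNReal.toReal_ofReal (hfpos j t ht).le, mul_comm]

lemma integrable_nuj {n : ℕ} {a abar : Fin n → ℝ} {f : Fin n → ℝ → ℝ}
    (hfmeas : ∀ j, Measurable (f j))
    (hfpos : ∀ j, ∀ t ∈ Set.Icc (a j) (abar j), 0 < f j t) (j : Fin n) (G : ℝ → ℝ) :
    Integrable G (nuj a abar f j)
      ↔ IntegrableOn (fun t => G t * f j t) (Set.Icc (a j) (abar j)) := by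
  rw [nuj, integrable_withDensity_iff_integrable_smul'
    (hfmeas j).ennreal_ofReal (by simp)]
  refine integrableOn_congr_fun (fun t ht => ?_) measurableSet_Icc
  simp only [smul_eq_mul]
  rw [ENNReal.toReal_ofReal (hfpos j t ht).le, mul_comm]

lemma upd_meas {n : ℕ} (j : Fin n) :
    Measurable (fun z : (Fin n → ℝ) × ℝ => Function.update z.1 j z.2) := by
  rw [measurable_pi_iff]
  intro k
  by_cases h : k = j
  · subst h; simpa using measurable_snd
  · simp only [Function.update_of_ne h]
    exact (measurable_pi_apply k).comp measurable_fst

lemma upd_mp {n : ℕ} (ν : Fin n → Measure ℝ) [∀ j, IsProbabilityMeasure (ν j)] (j : Fin n) :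
    MeasurePreserving (fun z : (Fin n → ℝ) × ℝ => Function.update z.1 j z.2)
      ((Measure.pi ν).prod (ν j)) (Measure.pi ν) := by
  refine ⟨upd_meas j, ?_⟩
  symm
  refine Measure.pi_eq fun s hs => ?_
  rw [Measure.map_apply (upd_meas j) (MeasurableSet.univ_pi hs)]
  have : (fun z : (Fin n → ℝ) × ℝ => Function.update z.1 j z.2) ⁻¹' (Set.univ.pi s)
      = (Set.univ.pi (Function.update s j Set.univ)) ×ˢ (s j) := by
    ext ⟨t, τ⟩
    simp only [Set.mem_preimage, Set.mem_pi, Set.mem_univ, true_implies, Set.mem_prod]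
    constructor
    · intro h
      refine ⟨fun k => ?_, by simpa using h j⟩
      by_cases hk : k = j
      · subst hk; simp
      · simpa [hk] using h k
    · rintro ⟨h1, h2⟩ k
      by_cases hk : k = j
      · subst hk; simpa using h2
      · simpa [hk] using h1 k
  rw [this, Measure.prod_prod, Measure.pi_pi, ← Finset.mul_prod_erase _ _ (Finset.mem_univ j),
    ← Finset.mul_prod_erase _ (fun i => ν i (s i)) (Finset.mem_univ j)]
  simp only [Function.update_self, measure_univ, one_mul]
  rw [mul_comm]
  congr 1
  refine Finset.prod_congr rfl fun k hk => ?_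
  rw [Function.update_of_ne (Finset.ne_of_mem_erase hk)]

lemma upd_integral {n : ℕ} (ν : Fin n → Measure ℝ) [∀ j, IsProbabilityMeasure (ν j)] (j : Fin n)
    (G : (Fin n → ℝ) → ℝ) (hG : Integrable G (Measure.pi ν)) :
    ∫ t, G t ∂(Measure.pi ν)
      = ∫ τ, ∫ t, G (Function.update t j τ) ∂(Measure.pi ν) ∂(ν j) := by
  have h := upd_mp ν j
  have hc : Integrable (fun z : (Fin n → ℝ) × ℝ => G (Function.update z.1 j z.2))
      ((Measure.pi ν).prod (ν j)) := h.integrable_comp_of_integrable hG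
  rw [← integral_prod_symm _ hc]
  conv_lhs => rw [← h.map_eq]
  rw [integral_map h.measurable.aemeasurable]
  rw [h.map_eq]; exact hG.aestronglyMeasurable

/-- Envelope theorem. -/
lemma envelope {θ a b : ℝ} (hθ : 0 < θ) (P V : ℝ → ℝ)
    (hIC : ∀ τ ∈ Set.Icc a b, ∀ t ∈ Set.Icc a b, V τ + θ * (t - τ) * P τ ≤ V t) :
    MonotoneOn P (Set.Icc a b) ∧
      ∀ t ∈ Set.Icc a b, V t = V a + θ * ∫ s in a..t, P s := by
  have hm : MonotoneOn P (Set.Icc a b) := by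
    intro s hs t ht hst
    rcases hst.eq_or_lt with rfl | hlt
    · rfl
    have h1 := hIC s hs t ht
    have h2 := hIC t ht s hs
    have h3 : 0 ≤ θ * (t - s) * (P t - P s) := by nlinarith
    have := nonneg_of_mul_nonneg_right h3 (mul_pos hθ (sub_pos.2 hlt))
    linarith
  refine ⟨hm, fun c hc => ?_⟩
  have hab : a ≤ b := hc.1.trans hc.2
  set Q : ℝ → ℝ := Set.IccExtend hab (fun x : Set.Icc a b => P x) with hQ
  have hQm : Monotone Q := Monotone.IccExtend (h := hab) (fun x y hxy => hm x.2 y.2 hxy)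
  have hQP : ∀ x ∈ Set.Icc a b, Q x = P x := fun x hx => by
    rw [hQ, Set.IccExtend_of_mem hab _ hx]
  have hsub : Set.Icc a c ⊆ Set.Icc a b := Set.Icc_subset_Icc_right hc.2
  have hlow : ∀ x ∈ Set.Icc a b, ∀ y ∈ Set.Icc a b, V x + θ * (y - x) * Q x ≤ V y := by
    intro x hx y hy; rw [hQP x hx]; exact hIC x hx y hy
  have key := integral_eq_of_hasDerivAt_off_countable_of_le V (fun s => θ * Q s) hc.1
    hQm.countable_not_continuousAt ?_ ?_ ?_
  · rw [intervalIntegral.integral_const_mul] at key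
    rw [intervalIntegral.integral_congr (g := Q)]
    · linarith
    · intro x hx
      rw [Set.uIcc_of_le hc.1] at hx
      exact (hQP x (hsub hx)).symm
  · -- continuity
    have hL : LipschitzOnWith (Real.toNNReal (θ * (|Q a| + |Q b|))) V (Set.Icc a b) := by
      refine LipschitzOnWith.of_dist_le_mul fun x hx y hy => ?_
      rw [Real.coe_toNNReal _ (by positivity), Real.dist_eq, Real.dist_eq]
      have h1 := hlow x hx y hy
      have h2 := hlow y hy x hx
      have hB : ∀ z ∈ Set.Icc a b, |Q z| ≤ |Q a| + |Q b| := by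
        intro z hz
        have e1 := hQm hz.1
        have e2 := hQm hz.2
        rw [abs_le]
        constructor
        · have := neg_abs_le (Q a); have := abs_nonneg (Q b); linarith
        · have := le_abs_self (Q b); have := abs_nonneg (Q a); linarith
      have hz : ∀ z ∈ Set.Icc a b, |θ * (x - y) * Q z| ≤ θ * (|Q a| + |Q b|) * |x - y| := by
        intro z hz
        rw [abs_mul, abs_mul, abs_of_pos hθ]
        have := mul_le_mul_of_nonneg_left (hB z hz) (mul_nonneg hθ.le (abs_nonneg (x - y)))
        linarith
      have hx' := abs_le.1 (hz x hx)
      have hy' := abs_le.1 (hz y hy)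
      rw [abs_le]
      constructor <;> linarith
    exact (hL.continuousOn).mono hsub
  · rintro x ⟨hx, hxc⟩
    have hcont : ContinuousAt Q x := by simpa using hxc
    have hxI : x ∈ Set.Icc a b := hsub ⟨hx.1.le, hx.2.le⟩
    rw [hasDerivAt_iff_isLittleO, Asymptotics.isLittleO_iff]
    intro ε hε
    have h1 : ∀ᶠ y in nhds x, y ∈ Set.Icc a b :=
      Icc_mem_nhds hx.1 (hx.2.trans_le hc.2)
    have h2 : ∀ᶠ y in nhds x, |Q y - Q x| < ε / θ := by
      have := Metric.continuousAt_iff'.1 hcont (ε / θ) (by positivity)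
      simpa [Real.dist_eq] using this
    filter_upwards [h1, h2] with y hy hQy
    have e1 := hlow x hxI y hy
    have e2 := hlow y hy x hxI
    rw [smul_eq_mul, Real.norm_eq_abs, Real.norm_eq_abs]
    have e3 : |θ * (y - x) * (Q y - Q x)| ≤ ε * |y - x| := by
      rw [abs_mul, abs_mul, abs_of_pos hθ]
      have := mul_le_mul_of_nonneg_left hQy.le (mul_nonneg hθ.le (abs_nonneg (y - x)))
      have e : θ * |y - x| * (ε / θ) = ε * |y - x| := by field_simp
      linarith
    have e4 := abs_le.1 e3
    rw [abs_le]
    constructor <;> linarith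
  · exact (hQm.intervalIntegrable).const_mul θ

lemma prim_cont {a b : ℝ} {f : ℝ → ℝ} (hf : IntegrableOn f (Set.Icc a b)) :
    ContinuousOn (fun t => ∫ τ in a..t, f τ) (Set.Icc a b) := by
  refine (intervalIntegral.continuousOn_primitive_Icc hf).congr fun t ht => ?_
  simp only [integral_Icc_eq_integral_Ioc, intervalIntegral.integral_of_le ht.1]

lemma fubini1 {a b : ℝ} (P f : ℝ → ℝ)
    (hP : MonotoneOn P (Set.Icc a b)) (hf : IntegrableOn f (Set.Icc a b))
    (hf1 : ∫ t in Set.Icc a b, f t = 1) :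
    ∫ t in Set.Icc a b, (∫ s in a..t, P s) * f t
      = ∫ s in Set.Icc a b, P s * (1 - ∫ τ in a..s, f τ) := by
  have hPi : IntegrableOn P (Set.Icc a b) := hP.integrableOn_isCompact isCompact_Icc
  set D : Set (ℝ × ℝ) := {z | z.2 ≤ z.1} with hD
  have hDm : MeasurableSet D := measurableSet_le measurable_snd measurable_fst
  have hK : Integrable (Function.uncurry fun t s => D.indicator (fun z => f z.1 * P z.2) (t, s))
      ((volume.restrict (Set.Icc a b)).prod (volume.restrict (Set.Icc a b))) := by
    exact (Integrable.mul_prod hf hPi).indicator hDm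
  have := integral_integral_swap hK
  calc _ = ∫ t in Set.Icc a b, ∫ s in Set.Icc a b, D.indicator (fun z => f z.1 * P z.2) (t, s) := by
        refine setIntegral_congr_fun measurableSet_Icc fun t ht => ?_
        have e : (fun s => D.indicator (fun z : ℝ × ℝ => f z.1 * P z.2) (t, s))
            = (Set.Iic t).indicator fun s => f t * P s := by
          ext s; simp [Set.indicator, hD]
        rw [e, setIntegral_indicator measurableSet_Iic, integral_const_mul, mul_comm,
          intervalIntegral.integral_of_le ht.1, ← integral_Icc_eq_integral_Ioc]
        congr 3
        ext s; simp only [Set.mem_Icc, Set.mem_inter_iff, Set.mem_Iic]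
        exact ⟨fun h => ⟨⟨h.1, h.2.trans ht.2⟩, h.2⟩, fun h => ⟨h.1.1, h.2⟩⟩
    _ = _ := this
    _ = _ := by
        refine setIntegral_congr_fun measurableSet_Icc fun s hs => ?_
        have e : (fun t => D.indicator (fun z : ℝ × ℝ => f z.1 * P z.2) (t, s))
            = (Set.Ici s).indicator fun t => f t * P s := by
          ext t; simp [Set.indicator, hD]
        rw [e, setIntegral_indicator measurableSet_Ici, integral_mul_const, mul_comm]
        congr 1
        have e2 : Set.Icc a b ∩ Set.Ici s = Set.Icc s b := by
          ext t; simp only [Set.mem_Icc, Set.mem_inter_iff, Set.mem_Ici]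
          exact ⟨fun h => ⟨h.2, h.1.2⟩, fun h => ⟨⟨hs.1.trans h.1, h.2⟩, h.1⟩⟩
        have i1 : IntervalIntegrable f volume a s := by
          rw [intervalIntegrable_iff_integrableOn_Icc_of_le hs.1]
          exact hf.mono_set (Set.Icc_subset_Icc_right hs.2)
        have i2 : IntervalIntegrable f volume s b := by
          rw [intervalIntegrable_iff_integrableOn_Icc_of_le hs.2]
          exact hf.mono_set (Set.Icc_subset_Icc_left hs.1)
        have := intervalIntegral.integral_add_adjacent_intervals i1 i2
        rw [e2, integral_Icc_eq_integral_Ioc, ← intervalIntegral.integral_of_le hs.2]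
        rw [integral_Icc_eq_integral_Ioc, ← intervalIntegral.integral_of_le (hs.1.trans hs.2)] at hf1
        linarith

lemma virt_integrable {n : ℕ} {a abar : Fin n → ℝ} {f : Fin n → ℝ → ℝ}
    (hfmeas : ∀ j, Measurable (f j))
    (hfpos : ∀ j, ∀ t ∈ Set.Icc (a j) (abar j), 0 < f j t)
    (hfprob : ∀ j, ∫ t in Set.Icc (a j) (abar j), f j t = 1) (j : Fin n) :
    Integrable (virtVal a f j) (nuj a abar f j) := by
  rw [integrable_nuj hfmeas hfpos]
  have hf := f_integrable hfprob j
  have h1 : IntegrableOn (fun t => t * f j t - (1 - ∫ τ in (a j)..t, f j τ))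
      (Set.Icc (a j) (abar j)) := by
    refine Integrable.sub (hf.continuousOn_mul continuousOn_id isCompact_Icc) ?_
    refine ContinuousOn.integrableOn_compact isCompact_Icc ?_
    exact continuousOn_const.sub (prim_cont hf)
  refine h1.congr_fun (fun t ht => ?_) measurableSet_Icc
  have := (hfpos j t ht).ne'
  simp only [virtVal]
  field_simp

lemma revenue {n : ℕ} {a abar : Fin n → ℝ} {f : Fin n → ℝ → ℝ} {θ : ℝ} (hθ : 0 < θ)
    (hfmeas : ∀ j, Measurable (f j))
    (hfpos : ∀ j, ∀ t ∈ Set.Icc (a j) (abar j), 0 < f j t)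
    (hfprob : ∀ j, ∫ t in Set.Icc (a j) (abar j), f j t = 1) (j : Fin n)
    (hab : a j < abar j)
    (q y : (Fin n → ℝ) → ℝ) (hq : Measurable q)
    (hq1 : ∀ t ∈ Tspace a abar, 0 ≤ q t ∧ q t ≤ 1)
    (hy : Integrable y (Measure.pi (nuj a abar f)))
    (P X : ℝ → ℝ)
    (hP : ∀ τ, P τ = ∫ t, q (Function.update t j τ) ∂(Measure.pi (nuj a abar f)))
    (hX : ∀ τ, X τ = ∫ t, y (Function.update t j τ) ∂(Measure.pi (nuj a abar f)))
    (hIC : ∀ τ ∈ Set.Icc (a j) (abar j), ∀ t ∈ Set.Icc (a j) (abar j),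
      θ * t * P τ - X τ ≤ θ * t * P t - X t) :
    Integrable (fun t => q t * virtVal a f j (t j)) (Measure.pi (nuj a abar f)) ∧
    ∫ t, y t ∂(Measure.pi (nuj a abar f))
      = θ * (∫ t, q t * virtVal a f j (t j) ∂(Measure.pi (nuj a abar f)))
        - (θ * a j * P (a j) - X (a j)) := by
  have := nuj_prob hfpos hfprob
  have hc := virt_integrable hfmeas hfpos hfprob j
  have hqc : Integrable (fun t => q t * virtVal a f j (t j)) (Measure.pi (nuj a abar f)) := by
    refine Integrable.bdd_mul (c := 1) ?_ hq.aestronglyMeasurable ?_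
    · exact (measurePreserving_eval (nuj a abar f) j).integrable_comp_of_integrable hc
    · filter_upwards [ae_mem_T hfpos hfprob] with t ht
      rw [Real.norm_eq_abs, abs_le]
      constructor <;> linarith [(hq1 t ht).1, (hq1 t ht).2]
  refine ⟨hqc, ?_⟩
  obtain ⟨hPm, hV⟩ := envelope hθ P (fun t => θ * t * P t - X t) (fun τ hτ t ht => by
    have := hIC τ hτ t ht
    linarith)
  have hPi : IntegrableOn P (Set.Icc (a j) (abar j)) := hPm.integrableOn_isCompact isCompact_Icc
  have hf := f_integrable hfprob j
  have hPae : AEStronglyMeasurable P (nuj a abar f j) :=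
    hPi.aestronglyMeasurable.mono_ac (nuj_ac a abar f j)
  have hPb : ∀ t ∈ Set.Icc (a j) (abar j), |P t| ≤ |P (a j)| + |P (abar j)| := by
    intro z hz
    have e1 := hPm (Set.left_mem_Icc.2 hab.le) hz hz.1
    have e2 := hPm hz (Set.right_mem_Icc.2 hab.le) hz.2
    rw [abs_le]
    constructor
    · have := neg_abs_le (P (a j)); have := abs_nonneg (P (abar j)); linarith
    · have := le_abs_self (P (abar j)); have := abs_nonneg (P (a j)); linarith
  have hPb' : ∀ᵐ t ∂(nuj a abar f j), ‖P t‖ ≤ |P (a j)| + |P (abar j)| := by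
    filter_upwards [ae_mem_Icc a abar f j] with t ht using hPb t ht
  have hPc : Integrable (fun t => P t * virtVal a f j t) (nuj a abar f j) :=
    hc.bdd_mul hPae hPb'
  have hid : Integrable (fun t : ℝ => t) (nuj a abar f j) := by
    rw [integrable_nuj hfmeas hfpos]
    exact hf.continuousOn_mul continuousOn_id isCompact_Icc
  have hPt : Integrable (fun t => P t * t) (nuj a abar f j) := hid.bdd_mul hPae hPb'
  have hprim : Integrable (fun t => ∫ s in (a j)..t, P s) (nuj a abar f j) := by
    rw [integrable_nuj hfmeas hfpos]
    exact hf.continuousOn_mul (prim_cont hPi) isCompact_Icc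
  -- the key one-dimensional identity
  have hkey : ∫ t, (∫ s in (a j)..t, P s) ∂(nuj a abar f j)
      = ∫ t, (P t * t - P t * virtVal a f j t) ∂(nuj a abar f j) := by
    rw [integral_nuj hfmeas hfpos, fubini1 P (f j) hPm hf (hfprob j), integral_nuj hfmeas hfpos]
    refine setIntegral_congr_fun measurableSet_Icc fun t ht => ?_
    have := (hfpos j t ht).ne'
    simp only [virtVal]
    field_simp
    ring
  rw [integral_sub hPt hPc] at hkey
  have hL : ∫ t, q t * virtVal a f j (t j) ∂(Measure.pi (nuj a abar f))
      = ∫ t, P t * virtVal a f j t ∂(nuj a abar f j) := by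
    rw [upd_integral (nuj a abar f) j _ hqc]
    refine integral_congr_ae (Filter.Eventually.of_forall fun τ => ?_)
    simp only [Function.update_self]
    rw [integral_mul_const, hP]
  rw [hL, upd_integral (nuj a abar f) j _ hy]
  have hXe : ∫ τ, X τ ∂(nuj a abar f j)
      = ∫ τ, (θ * (P τ * τ) - (θ * a j * P (a j) - X (a j)) - θ * ∫ s in (a j)..τ, P s)
          ∂(nuj a abar f j) := by
    refine integral_congr_ae ?_
    filter_upwards [ae_mem_Icc a abar f j] with t ht
    have := hV t ht
    linarith
  simp only [← hX]
  have hA : Integrable (fun τ => θ * (P τ * τ) - (θ * a j * P (a j) - X (a j))) (nuj a abar f j) :=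
    (hPt.const_mul θ).sub (integrable_const _)
  rw [hXe, integral_sub hA (hprim.const_mul θ),
    integral_sub (hPt.const_mul θ) (integrable_const _), integral_const_mul, integral_const_mul,
    hkey]
  simp
  ring

lemma upd_mem {n : ℕ} {a abar : Fin n → ℝ} {t : Fin n → ℝ} (ht : t ∈ Tspace a abar)
    {j : Fin n} {τ : ℝ} (hτ : τ ∈ Set.Icc (a j) (abar j)) :
    Function.update t j τ ∈ Tspace a abar := by
  intro k _
  by_cases hk : k = j
  · subst hk; simpa using hτ
  · simpa [hk] using ht k (Set.mem_univ k)

lemma q_bound {m : ℕ} {p : Fin m → ℝ} (h : (∀ i, 0 ≤ p i) ∧ ∑ i, p i ≤ 1)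
    (A : Finset (Fin m)) : 0 ≤ ∑ i ∈ A, p i ∧ ∑ i ∈ A, p i ≤ 1 :=
  ⟨Finset.sum_nonneg fun i _ => h.1 i,
    (Finset.sum_le_sum_of_subset_of_nonneg (Finset.subset_univ A) fun i _ _ => h.1 i).trans h.2⟩

lemma welfare_lt {n m : ℕ} {θ hval : ℝ} (hθ : 0 < θ) {r : Fin m → ℝ}
    {S : Fin n → Finset (Fin m)} {c : Fin n → ℝ → ℝ} {i : Fin m} {t : Fin n → ℝ} {j : Fin n}
    {s s' : ℝ} (hc : c j s < c j s') (hi : i ∈ S j) :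
    virtWelfare θ hval r S c i (Function.update t j s)
      < virtWelfare θ hval r S c i (Function.update t j s') := by
  unfold virtWelfare
  refine sub_lt_sub_right (Finset.sum_lt_sum (fun k _ => ?_) ⟨j, by simp [hi], ?_⟩) _
  · by_cases hk : k = j
    · subst hk; simp only [Function.update_self]
      nlinarith
    · simp [hk]
  · simp only [Function.update_self]
    nlinarith

lemma welfare_eq {n m : ℕ} {θ hval : ℝ} {r : Fin m → ℝ}
    {S : Fin n → Finset (Fin m)} {c : Fin n → ℝ → ℝ} {i : Fin m} {t : Fin n → ℝ} {j : Fin n}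
    (s s' : ℝ) (hi : i ∉ S j) :
    virtWelfare θ hval r S c i (Function.update t j s)
      = virtWelfare θ hval r S c i (Function.update t j s') := by
  unfold virtWelfare
  congr 1
  refine Finset.sum_congr rfl fun k hk => ?_
  have : k ≠ j := by rintro rfl; simp at hk; exact hi hk
  simp [this]

lemma xstar_meas {n m : ℕ} (θ : ℝ) (a : Fin n → ℝ) (S : Fin n → Finset (Fin m))
    {p : (Fin n → ℝ) → Fin m → ℝ} (hp : Measurable p) (j : Fin n) :
    Measurable (fun t => xstar θ a S p t j) := by
  have hq : Measurable fun t => ∑ i ∈ S j, p t i :=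
    Finset.measurable_fun_sum _ fun i _ => (measurable_pi_apply i).comp hp
  have hu : Measurable fun z : (Fin n → ℝ) × ℝ => ∑ i ∈ S j, p (Function.update z.1 j z.2) i :=
    hq.comp (upd_meas j)
  have hz : Measurable fun z : (Fin n → ℝ) × ℝ => z.1 j :=
    (measurable_pi_apply j).comp measurable_fst
  have h1 : Measurable fun t : Fin n → ℝ => ∫ τ in Set.Ioc (a j) (t j),
      ∑ i ∈ S j, p (Function.update t j τ) i := by
    have hD : MeasurableSet {z : (Fin n → ℝ) × ℝ | z.2 ∈ Set.Ioc (a j) (z.1 j)} :=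
      (measurableSet_lt measurable_const measurable_snd).inter (measurableSet_le measurable_snd hz)
    have := (StronglyMeasurable.integral_prod_right (ν := (volume : Measure ℝ))
      (f := fun t τ => {z : (Fin n → ℝ) × ℝ | z.2 ∈ Set.Ioc (a j) (z.1 j)}.indicator
        (fun z => ∑ i ∈ S j, p (Function.update z.1 j z.2) i) (t, τ))
      (hu.indicator hD).stronglyMeasurable).measurable
    refine (congrArg Measurable ?_).mp this
    ext t
    rw [← integral_indicator measurableSet_Ioc]
    rfl
  have h2 : Measurable fun t : Fin n → ℝ => ∫ τ in Set.Ioc (t j) (a j),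
      ∑ i ∈ S j, p (Function.update t j τ) i := by
    have hD : MeasurableSet {z : (Fin n → ℝ) × ℝ | z.2 ∈ Set.Ioc (z.1 j) (a j)} :=
      (measurableSet_lt hz measurable_snd).inter (measurableSet_le measurable_snd measurable_const)
    have := (StronglyMeasurable.integral_prod_right (ν := (volume : Measure ℝ))
      (f := fun t τ => {z : (Fin n → ℝ) × ℝ | z.2 ∈ Set.Ioc (z.1 j) (a j)}.indicator
        (fun z => ∑ i ∈ S j, p (Function.update z.1 j z.2) i) (t, τ))
      (hu.indicator hD).stronglyMeasurable).measurable
    refine (congrArg Measurable ?_).mp this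
    ext t
    rw [← integral_indicator measurableSet_Ioc]
    rfl
  unfold xstar intervalIntegral
  exact (((measurable_pi_apply j).const_mul θ).mul hq).sub ((h1.sub h2).const_mul θ)

lemma xstar_bound {n m : ℕ} {θ : ℝ} (hθ : 0 < θ) {a abar : Fin n → ℝ} {S : Fin n → Finset (Fin m)}
    {p : (Fin n → ℝ) → Fin m → ℝ}
    (hff : ∀ t ∈ Tspace a abar, (∀ i, 0 ≤ p t i) ∧ ∑ i, p t i ≤ 1)
    (j : Fin n) : ∀ t ∈ Tspace a abar, ‖xstar θ a S p t j‖
      ≤ θ * (|a j| + |abar j|) + θ * (abar j - a j) := by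
  intro t ht
  have htj := ht j (Set.mem_univ j)
  have hq := q_bound (hff t ht) (S j)
  unfold xstar
  refine (norm_sub_le _ _).trans (add_le_add ?_ ?_)
  · rw [norm_mul, norm_mul, Real.norm_eq_abs, Real.norm_eq_abs, Real.norm_eq_abs, abs_of_pos hθ,
      abs_of_nonneg hq.1]
    have h1 : |t j| ≤ |a j| + |abar j| := by
      rw [abs_le]
      constructor
      · have := neg_abs_le (a j); have := abs_nonneg (abar j); linarith [htj.1]
      · have := le_abs_self (abar j); have := abs_nonneg (a j); linarith [htj.2]
    calc θ * |t j| * _ ≤ θ * |t j| * 1 := mul_le_mul_of_nonneg_left hq.2 (by positivity)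
      _ ≤ _ := by rw [mul_one]; exact mul_le_mul_of_nonneg_left h1 hθ.le
  · rw [norm_mul, Real.norm_eq_abs, abs_of_pos hθ]
    refine mul_le_mul_of_nonneg_left ?_ hθ.le
    have := intervalIntegral.norm_integral_le_of_norm_le_const (a := a j) (b := t j) (C := 1)
      (f := fun τ => ∑ i ∈ S j, p (Function.update t j τ) i) (fun τ hτ => by
        rw [Set.uIoc_of_le htj.1] at hτ
        have := q_bound (hff _ (upd_mem ht (j := j) ⟨hτ.1.le, hτ.2.trans htj.2⟩)) (S j)
        rw [Real.norm_eq_abs, abs_of_nonneg this.1]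
        exact this.2)
    rw [one_mul, abs_of_nonneg (by linarith [htj.1])] at this
    linarith [htj.2]

/-- one-dimensional incentive inequality -/
lemma mono_ineq {g : ℝ → ℝ} {a b : ℝ} (hg : MonotoneOn g (Set.Icc a b)) {s t : ℝ}
    (hs : s ∈ Set.Icc a b) (ht : t ∈ Set.Icc a b) :
    (t - s) * g s + ∫ x in a..s, g x ≤ ∫ x in a..t, g x := by
  have hi : ∀ u ∈ Set.Icc a b, ∀ v ∈ Set.Icc a b, IntervalIntegrable g volume u v := by
    intro u hu v hv
    exact MonotoneOn.intervalIntegrable (hg.mono (Set.uIcc_subset_Icc hu hv))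
  have ha : a ∈ Set.Icc a b := ⟨le_rfl, hs.1.trans hs.2⟩
  rw [← intervalIntegral.integral_add_adjacent_intervals (hi a ha s hs) (hi s hs t ht), add_comm]
  refine add_le_add_right ?_ _
  rcases le_total s t with h | h
  · have := intervalIntegral.integral_mono_on (f := fun _ => g s) h intervalIntegrable_const
      (hi s hs t ht) (fun x hx => hg hs ⟨hs.1.trans hx.1, hx.2.trans ht.2⟩ hx.1)
    simpa using this
  · have := intervalIntegral.integral_mono_on (g := fun _ => g s) h (hi t ht s hs)
      intervalIntegrable_const
      (fun x hx => hg ⟨ht.1.trans hx.1, hx.2.trans hs.2⟩ hs hx.2)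
    rw [intervalIntegral.integral_symm]
    simp at this
    linarith

/-- Theorem 1 (revenue optimality of the proposed auction): under regularity,
the mechanism (p*, x*), where p* maximizes the virtual welfare pointwise and
x* is the associated payment rule, satisfies FF, IC and IR, and its expected
revenue dominates that of every measurable, integrable mechanism (p, x)
satisfying FF, IC and IR. -/
theorem stmt_15 {n m : ℕ} (θ hval : ℝ) (hθ : 0 < θ) (hh : 0 ≤ hval)
    (r : Fin m → ℝ) (a abar : Fin n → ℝ) (hab : ∀ j, a j < abar j)
    (f : Fin n → ℝ → ℝ)
    (hfmeas : ∀ j, Measurable (f j))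
    (hfpos : ∀ j, ∀ t ∈ Set.Icc (a j) (abar j), 0 < f j t)
    (hfprob : ∀ j, ∫ t in Set.Icc (a j) (abar j), f j t = 1)
    (S : Fin n → Finset (Fin m))
    -- regularity: each virtual valuation is strictly increasing
    (hreg : ∀ j, StrictMonoOn (virtVal a f j) (Set.Icc (a j) (abar j)))
    (pstar : (Fin n → ℝ) → Fin m → ℝ) (hpsmeas : Measurable pstar)
    (hp1 : ∀ t ∈ Tspace a abar,
        (∃ i, 0 < virtWelfare θ hval r S (virtVal a f) i t) →
        ∃ k, (∀ i, virtWelfare θ hval r S (virtVal a f) i t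
              ≤ virtWelfare θ hval r S (virtVal a f) k t) ∧
          pstar t k = 1 ∧ ∀ i, i ≠ k → pstar t i = 0)
    (hp2 : ∀ t ∈ Tspace a abar,
        (∀ i, virtWelfare θ hval r S (virtVal a f) i t ≤ 0) → ∀ i, pstar t i = 0)
    (hWint : ∀ i, IntegrableOn
        (fun t => virtWelfare θ hval r S (virtVal a f) i t * jointDens f t)
        (Tspace a abar)) :
    -- (p*, x*) is fraction feasible, incentive compatible and individually rational
    (∀ t ∈ Tspace a abar, (∀ i, 0 ≤ pstar t i) ∧ ∑ i, pstar t i ≤ 1) ∧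
    IC θ a abar f S pstar (xstar θ a S pstar) ∧
    IR θ a abar f S pstar (xstar θ a S pstar) ∧
    -- and its expected revenue dominates every feasible IC and IR mechanism
    (∀ (p : (Fin n → ℝ) → Fin m → ℝ) (x : (Fin n → ℝ) → Fin n → ℝ),
      Measurable p → Measurable x →
      (∀ j, IntegrableOn (fun t => x t j * jointDens f t) (Tspace a abar)) →
      (∀ t ∈ Tspace a abar, (∀ i, 0 ≤ p t i) ∧ ∑ i, p t i ≤ 1) →
      IC θ a abar f S p x → IR θ a abar f S p x →
      expRev hval r a abar f S p x
        ≤ expRev hval r a abar f S pstar (xstar θ a S pstar)) := by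
  have hpr := nuj_prob hfpos hfprob
  have hT := ae_mem_T hfpos hfprob
  -- fraction feasibility
  have hff : ∀ t ∈ Tspace a abar, (∀ i, 0 ≤ pstar t i) ∧ ∑ i, pstar t i ≤ 1 := by
    intro t ht
    by_cases hex : ∃ i, 0 < virtWelfare θ hval r S (virtVal a f) i t
    · obtain ⟨k, -, hk1, hk0⟩ := hp1 t ht hex
      refine ⟨fun i => ?_, ?_⟩
      · by_cases hi : i = k
        · subst hi; rw [hk1]; exact zero_le_one
        · rw [hk0 i hi]
      · rw [Finset.sum_eq_single k (fun i _ hi => hk0 i hi) (by simp), hk1]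
    · push Not at hex
      have := hp2 t ht hex
      simp [this]
  -- monotonicity
  have hmono : ∀ j, ∀ t ∈ Tspace a abar,
      MonotoneOn (fun τ => ∑ i ∈ S j, pstar (Function.update t j τ) i)
        (Set.Icc (a j) (abar j)) := by
    intro j t ht s hs s' hs' hss
    rcases hss.eq_or_lt with rfl | hlt
    · rfl
    have hu := upd_mem ht hs
    have hu' := upd_mem ht hs'
    have hc := hreg j hs hs' hlt
    have hb := q_bound (hff _ hu) (S j)
    have hb' := q_bound (hff _ hu') (S j)
    simp only
    by_cases hex : ∃ i, 0 < virtWelfare θ hval r S (virtVal a f) i (Function.update t j s)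
    · obtain ⟨k, hkmax, hk1, hk0⟩ := hp1 _ hu hex
      by_cases hkS : k ∈ S j
      · have h1 := welfare_lt (hval := hval) (r := r) (t := t) hθ hc hkS
        obtain ⟨i0, hi0⟩ := hex
        have h2 := hi0.trans_le (hkmax i0)
        obtain ⟨k', hkmax', hk1', hk0'⟩ := hp1 _ hu' ⟨k, h2.trans h1⟩
        have hk'S : k' ∈ S j := by
          by_contra hn
          have e1 := welfare_eq (θ := θ) (hval := hval) (r := r) (c := virtVal a f) (t := t) s s' hn
          have e2 := hkmax k'
          have e3 := hkmax' k
          linarith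
        have h3 := Finset.single_le_sum (f := fun i => pstar (Function.update t j s') i)
          (fun i _ => (hff _ hu').1 i) hk'S
        simp only [hk1'] at h3
        linarith [hb.2]
      · rw [Finset.sum_eq_zero (fun i hi => hk0 i (by rintro rfl; exact hkS hi))]
        exact hb'.1
    · push Not at hex
      rw [Finset.sum_eq_zero (fun i _ => hp2 _ hu hex i)]
      exact hb'.1
  -- conversion
  have hIA : ∀ (p : (Fin n → ℝ) → Fin m → ℝ) j τ, interimAlloc a abar f S p j τ
      = ∫ t, ∑ i ∈ S j, p (Function.update t j τ) i ∂(Measure.pi (nuj a abar f)) :=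
    fun p j τ => integral_conv hfmeas hfpos hfprob _
  have hIP : ∀ (x : (Fin n → ℝ) → Fin n → ℝ) j τ, interimPay a abar f x j τ
      = ∫ t, x (Function.update t j τ) j ∂(Measure.pi (nuj a abar f)) :=
    fun x j τ => integral_conv hfmeas hfpos hfprob _
  have hqm : ∀ (p : (Fin n → ℝ) → Fin m → ℝ), Measurable p → ∀ j,
      Measurable fun t => ∑ i ∈ S j, p t i := fun p hp j =>
    Finset.measurable_fun_sum _ fun i _ => (measurable_pi_apply i).comp hp
  have hum : ∀ (j : Fin n) (τ : ℝ), Measurable fun t : Fin n → ℝ => Function.update t j τ :=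
    fun j τ => (upd_meas j).comp (measurable_id.prodMk measurable_const)
  have hqi : ∀ j, ∀ τ ∈ Set.Icc (a j) (abar j),
      Integrable (fun t => ∑ i ∈ S j, pstar (Function.update t j τ) i)
        (Measure.pi (nuj a abar f)) := by
    intro j τ hτ
    refine Integrable.of_bound ((hqm pstar hpsmeas j).comp (hum j τ)).aestronglyMeasurable 1 ?_
    filter_upwards [hT] with t ht
    have := q_bound (hff _ (upd_mem ht hτ)) (S j)
    rw [Real.norm_eq_abs, abs_of_nonneg this.1]
    exact this.2
  have hxi : ∀ j, ∀ τ ∈ Set.Icc (a j) (abar j),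
      Integrable (fun t => xstar θ a S pstar (Function.update t j τ) j)
        (Measure.pi (nuj a abar f)) := by
    intro j τ hτ
    refine Integrable.of_bound
      ((xstar_meas θ a S hpsmeas j).comp (hum j τ)).aestronglyMeasurable
      (θ * (|a j| + |abar j|) + θ * (abar j - a j)) ?_
    filter_upwards [hT] with t ht using xstar_bound hθ hff j _ (upd_mem ht hτ)
  have hxi' : ∀ j, Integrable (fun t => xstar θ a S pstar t j) (Measure.pi (nuj a abar f)) := by
    intro j
    refine Integrable.of_bound (xstar_meas θ a S hpsmeas j).aestronglyMeasurable
      (θ * (|a j| + |abar j|) + θ * (abar j - a j)) ?_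
    filter_upwards [hT] with t ht using xstar_bound hθ hff j _ ht
  have hxs : ∀ j τ t, xstar θ a S pstar (Function.update t j τ) j
      = θ * τ * (∑ i ∈ S j, pstar (Function.update t j τ) i)
        - θ * ∫ s in (a j)..τ, ∑ i ∈ S j, pstar (Function.update t j s) i := by
    intro j τ t
    simp only [xstar, Function.update_self, Function.update_idem]
  have hIC : IC θ a abar f S pstar (xstar θ a S pstar) := by
    intro j τ hτ t ht
    rw [vtld, hIA, hIA, hIP, hIP, ← integral_const_mul, ← integral_const_mul,
      ← integral_sub ((hqi j τ hτ).const_mul _) (hxi j τ hτ),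
      ← integral_sub ((hqi j t ht).const_mul _) (hxi j t ht)]
    refine integral_mono_ae (((hqi j τ hτ).const_mul _).sub (hxi j τ hτ))
      (((hqi j t ht).const_mul _).sub (hxi j t ht)) ?_
    filter_upwards [hT] with s hs
    rw [hxs, hxs]
    have := mul_le_mul_of_nonneg_left (mono_ineq (hmono j s hs) hτ ht) hθ.le
    linarith
  have hIR : IR θ a abar f S pstar (xstar θ a S pstar) := by
    intro j t ht
    rw [vtld, hIA, hIP, ← integral_const_mul,
      ← integral_sub ((hqi j t ht).const_mul _) (hxi j t ht)]
    refine integral_nonneg_of_ae ?_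
    filter_upwards [hT] with s hs
    rw [hxs]
    have : 0 ≤ ∫ u in (a j)..t, ∑ i ∈ S j, pstar (Function.update s j u) i :=
      intervalIntegral.integral_nonneg ht.1 fun u hu =>
        (q_bound (hff _ (upd_mem hs ⟨hu.1, hu.2.trans ht.2⟩)) (S j)).1
    have := mul_nonneg hθ.le this
    simp only [Pi.zero_apply]
    linarith
  refine ⟨hff, hIC, hIR, ?_⟩
  -- general revenue formula
  have hrev : ∀ (p : (Fin n → ℝ) → Fin m → ℝ) (x : (Fin n → ℝ) → Fin n → ℝ),
      Measurable p →
      (∀ j, Integrable (fun t => x t j) (Measure.pi (nuj a abar f))) →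
      (∀ t ∈ Tspace a abar, (∀ i, 0 ≤ p t i) ∧ ∑ i, p t i ≤ 1) →
      IC θ a abar f S p x →
      Integrable (fun t => ∑ i, p t i * virtWelfare θ hval r S (virtVal a f) i t)
        (Measure.pi (nuj a abar f)) ∧
      expRev hval r a abar f S p x
        = (∫ t, ∑ i, p t i * virtWelfare θ hval r S (virtVal a f) i t
            ∂(Measure.pi (nuj a abar f))) - ∑ j, vtld θ a abar f S p x j (a j) := by
    intro p x hp hx hpf hic
    have hR := fun j => revenue hθ hfmeas hfpos hfprob j (hab j) (fun t => ∑ i ∈ S j, p t i)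
      (fun t => x t j) (hqm p hp j) (fun t ht => q_bound (hpf t ht) (S j)) (hx j)
      (interimAlloc a abar f S p j) (interimPay a abar f x j) (hIA p j) (hIP x j)
      (fun τ hτ t ht => hic j τ hτ t ht)
    have hpi : ∀ i, Integrable (fun t => p t i) (Measure.pi (nuj a abar f)) := by
      intro i
      refine Integrable.of_bound ((measurable_pi_apply i).comp hp).aestronglyMeasurable 1 ?_
      filter_upwards [hT] with t ht
      have := q_bound (hpf t ht) {i}
      rw [Finset.sum_singleton] at this
      rw [Real.norm_eq_abs, abs_of_nonneg this.1]
      exact this.2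
    have i1 : Integrable (fun t => ∑ i, p t i * r i) (Measure.pi (nuj a abar f)) :=
      integrable_finsetSum _ fun i _ => (hpi i).mul_const _
    have i2 : Integrable (fun t => ∑ i, p t i
        * ((Finset.univ.filter fun j => i ∈ S j).card : ℝ) * hval)
        (Measure.pi (nuj a abar f)) :=
      integrable_finsetSum _ fun i _ => ((hpi i).mul_const _).mul_const _
    have i3 : Integrable (fun t => ∑ j, x t j) (Measure.pi (nuj a abar f)) :=
      integrable_finsetSum _ fun j _ => hx j
    have i4 : Integrable (fun t => ∑ j, θ * ((∑ i ∈ S j, p t i) * virtVal a f j (t j)))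
        (Measure.pi (nuj a abar f)) :=
      integrable_finsetSum _ fun j _ => (hR j).1.const_mul θ
    have hpt : ∀ t, ∑ i, p t i * virtWelfare θ hval r S (virtVal a f) i t
        = ∑ j, θ * ((∑ i ∈ S j, p t i) * virtVal a f j (t j)) - ∑ i, p t i * r i
          - ∑ i, p t i * ((Finset.univ.filter fun j => i ∈ S j).card : ℝ) * hval := by
      intro t
      have e : ∑ j, θ * ((∑ i ∈ S j, p t i) * virtVal a f j (t j))
          = ∑ i, p t i * ∑ s ∈ Finset.univ.filter fun j => i ∈ S j, θ * virtVal a f s (t s) := by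
        simp only [Finset.sum_mul, Finset.mul_sum, Finset.sum_filter]
        rw [Finset.sum_comm (s := (Finset.univ : Finset (Fin m)))]
        refine Finset.sum_congr rfl fun j _ => ?_
        simp only [mul_ite, mul_zero]
        rw [← Finset.sum_filter, Finset.filter_univ_mem]
        exact Finset.sum_congr rfl fun i _ => by ring
      rw [e, ← Finset.sum_sub_distrib, ← Finset.sum_sub_distrib]
      refine Finset.sum_congr rfl fun i _ => ?_
      rw [virtWelfare, Finset.sum_sub_distrib, Finset.sum_const, nsmul_eq_mul]
      ring
    simp only [hpt]
    refine ⟨(i4.sub i1).sub i2, ?_⟩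
    have i31 : Integrable (fun t => ∑ j, x t j - ∑ i, p t i * r i)
      (Measure.pi (nuj a abar f)) := i3.sub i1
    have i41 : Integrable (fun t => ∑ j, θ * ((∑ i ∈ S j, p t i) * virtVal a f j (t j))
      - ∑ i, p t i * r i) (Measure.pi (nuj a abar f)) := i4.sub i1
    rw [expRev, integral_conv hfmeas hfpos hfprob, integral_sub i31 i2, integral_sub i3 i1,
      integral_sub i41 i2, integral_sub i4 i1, integral_finsetSum _ fun j _ => hx j,
      integral_finsetSum _ fun j _ => (hR j).1.const_mul θ]
    have : ∑ j, ∫ t, x t j ∂(Measure.pi (nuj a abar f))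
        = ∑ j, ∫ t, θ * ((∑ i ∈ S j, p t i) * virtVal a f j (t j)) ∂(Measure.pi (nuj a abar f))
          - ∑ j, vtld θ a abar f S p x j (a j) := by
      rw [← Finset.sum_sub_distrib]
      refine Finset.sum_congr rfl fun j _ => ?_
      rw [(hR j).2, integral_const_mul, vtld]
    rw [this]
    ring
  intro p x hp _ hx hpf hic hir
  obtain ⟨j1, e1⟩ := hrev p x hp (fun j => (integrable_conv hfmeas hfpos hfprob _).1 (hx j)) hpf hic
  obtain ⟨j2, e2⟩ := hrev pstar _ hpsmeas hxi' hff hIC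
  rw [e1, e2]
  have hv0 : ∀ j, vtld θ a abar f S pstar (xstar θ a S pstar) j (a j) = 0 := by
    intro j
    rw [vtld, hIA, hIP]
    simp only [hxs, intervalIntegral.integral_same, mul_zero, sub_zero]
    rw [integral_const_mul, sub_self]
  have hv1 : 0 ≤ ∑ j, vtld θ a abar f S p x j (a j) :=
    Finset.sum_nonneg fun j _ => hir j (a j) (Set.left_mem_Icc.2 (hab j).le)
  simp only [hv0, Finset.sum_const_zero, sub_zero]
  refine (sub_le_self _ hv1).trans (integral_mono_ae j1 j2 ?_)
  filter_upwards [hT] with t ht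
  obtain ⟨hp0, hpsum⟩ := hpf t ht
  by_cases hex : ∃ i, 0 < virtWelfare θ hval r S (virtVal a f) i t
  · obtain ⟨k, hkmax, hk1, hk0⟩ := hp1 t ht hex
    obtain ⟨i0, hi0⟩ := hex
    have hk := hi0.trans_le (hkmax i0)
    rw [Finset.sum_eq_single (f := fun i => pstar t i * _) k
      (fun i _ hi => by rw [hk0 i hi, zero_mul]) (by simp), hk1, one_mul]
    calc _ ≤ ∑ i, p t i * virtWelfare θ hval r S (virtVal a f) k t :=
          Finset.sum_le_sum fun i _ => mul_le_mul_of_nonneg_left (hkmax i) (hp0 i)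
      _ = (∑ i, p t i) * virtWelfare θ hval r S (virtVal a f) k t := by rw [Finset.sum_mul]
      _ ≤ _ := mul_le_of_le_one_left hk.le hpsum
  · push Not at hex
    have := hp2 t ht hex
    simp only [this, zero_mul, Finset.sum_const_zero]
    exact Finset.sum_nonpos fun i _ => mul_nonpos_of_nonneg_of_nonpos (hp0 i) (hex i)

end Caching
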